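/- The set of continuous functions g : V → ℝ whose restriction to V* has finite energy, i.e. sup_{n≥0} 𝓔_n(g|_{V_n}, g|_{V_n}) < ∞, is dense in the space C(V) of continuous real-valued functions on V with the supremum norm. -/

import Mathlib

open Set MeasureTheory Filter Topology
open scoped Classical ENNReal NNReal BoundedContinuousFunction

noncomputable section

/-- The plane, with the Euclidean norm. -/
abbrev Pt : Type := EuclideanSpace ℝ (Fin 2)

/-- The three vertexes of the initial equilateral triangle. -/
def ptA : Fin 3 → Pt
  | 0 => (WithLp.equiv 2 (Fin 2 → ℝ)).symm ![0, 0]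
  | 1 => (WithLp.equiv 2 (Fin 2 → ℝ)).symm ![1, 0]
  | 2 => (WithLp.equiv 2 (Fin 2 → ℝ)).symm ![1 / 2, Real.sqrt 3 / 2]

/-- The contraction `fᵢ(z) = (z + aᵢ)/2`. -/
def sgMap (i : Fin 3) (z : Pt) : Pt := (2 : ℝ)⁻¹ • (z + ptA i)

/-- The vertex sets `V_n`. -/
def Vn : ℕ → Finset Pt
  | 0 => {ptA 0, ptA 1, ptA 2}
  | n + 1 => (Vn n).image (sgMap 0) ∪ (Vn n).image (sgMap 1) ∪ (Vn n).image (sgMap 2)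

/-- `V* = ⋃ₙ Vₙ`. -/
def Vstar : Set Pt := ⋃ n, (Vn n : Set Pt)

/-- The Sierpinski gasket `V`, the closure of `V*`. -/
def sg : Set Pt := closure Vstar

lemma Vstar_subset_sg {x : Pt} (hx : x ∈ Vstar) : x ∈ sg :=
  subset_closure hx

lemma Vn_subset_sg {n : ℕ} {x : Pt} (hx : x ∈ Vn n) : x ∈ sg :=
  subset_closure (Set.mem_iUnion.mpr ⟨n, hx⟩)

/-- `{x,y}` is an edge of the graph `Γₙ`. -/
def isEdge (n : ℕ) (x y : Pt) : Prop := ‖x - y‖ = (2 : ℝ) ^ (-(n : ℤ))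

/-- The discrete energy form `𝓔ₙ(u,v) = (5/3)ⁿ Σ_{{x,y}∈Eₙ} (u(y)-u(x))(v(y)-v(x))`;
the sum over unordered pairs is written as half the sum over ordered pairs. -/
def energyBi (n : ℕ) (u v : Pt → ℝ) : ℝ :=
  (5 / 3 : ℝ) ^ n * (1 / 2) *
    ∑ x ∈ Vn n, ∑ y ∈ Vn n, if isEdge n x y then (u y - u x) * (v y - v x) else 0

/-- The discrete energy `𝓔ₙ(u,u)`. -/
def energy (n : ℕ) (u : Pt → ℝ) : ℝ := energyBi n u u

/-- The discrete Laplacian `Δₙ g(x) = 5ⁿ Σ_{y:{x,y}∈Eₙ} (g(y)-g(x))`. -/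
def discLap (n : ℕ) (g : Pt → ℝ) (x : Pt) : ℝ :=
  (5 : ℝ) ^ n * ∑ y ∈ Vn n, if isEdge n x y then g y - g x else 0

/-- A function on `V*` has finite energy if `supₙ 𝓔ₙ(u,u) < ∞`. -/
def FiniteEnergy (u : Pt → ℝ) : Prop := BddAbove (Set.range fun n => energy n u)

/-- The empirical vertex measure `μₙ`, giving mass `3⁻ⁿ` to each point of `Vₙ`. -/
def empMeas (n : ℕ) : Measure Pt :=
  ((3 : ℝ≥0∞) ^ n)⁻¹ • ∑ x ∈ Vn n, Measure.dirac x

/-- Extension by zero of a continuous function on the gasket. -/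
def sgExt (f : C(sg, ℝ)) (x : Pt) : ℝ := if hx : x ∈ sg then f ⟨x, hx⟩ else 0

/-- `h(k)! = h(1)⋯h(k)`, with `h(0)! = 1`. -/
def hfact (h : ℕ → ℝ) (k : ℕ) : ℝ := ∏ i ∈ Finset.range k, h (i + 1)

/-- The partition function `Z(φ) = Σₖ φᵏ/h(k)!`. -/
def Zfun (h : ℕ → ℝ) (φ : ℝ) : ℝ := ∑' k, φ ^ k / hfact h k

/-- The one-site marginal `p_φ(k) = Z(φ)⁻¹ φᵏ/h(k)!`. -/
def pmarg (h : ℕ → ℝ) (φ : ℝ) (k : ℕ) : ℝ := (Zfun h φ)⁻¹ * φ ^ k / hfact h k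

/-- The mean of the one-site marginal `p_φ`. -/
def meanFun (h : ℕ → ℝ) (φ : ℝ) : ℝ := ∑' k : ℕ, (k : ℝ) * pmarg h φ k

/-- The zero-range generator on `Ωₙ = ℕ^{Vₙ}`, summing over ordered pairs `(x,y)`
with `{x,y} ∈ Eₙ`. -/
def zrGen (n : ℕ) (h : ℕ → ℝ) (F : (↥(Vn n) → ℕ) → ℝ) (η : ↥(Vn n) → ℕ) : ℝ :=
  ∑ x : ↥(Vn n), ∑ y : ↥(Vn n),
    if isEdge n x.1 y.1 then
      h (η x) * (F (Function.update (Function.update η x (η x - 1)) y (η y + 1)) - F η)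
    else 0

/-! ### Barycentric coordinates and elementary geometry -/

/-- Barycentric coordinates with respect to `a₀, a₁, a₂`. -/
def bc (z : Pt) : Fin 3 → ℝ :=
  ![1 - z 0 - z 1 / Real.sqrt 3, z 0 - z 1 / Real.sqrt 3, 2 * (z 1 / Real.sqrt 3)]

/-- Standard basis vectors of `ℝ³`. -/
def ev (i : Fin 3) : Fin 3 → ℝ := fun j => if j = i then 1 else 0

lemma bc_ptA (i : Fin 3) : bc (ptA i) = ev i := by
  have h3 : Real.sqrt 3 ≠ 0 := by positivity
  funext j
  fin_cases i <;> fin_cases j <;> simp [bc, ptA, ev] <;> field_simp <;> norm_num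

lemma bc_sgMap (i : Fin 3) (z : Pt) (j : Fin 3) :
    bc (sgMap i z) j = (bc z j + ev i j) / 2 := by
  have h3 : Real.sqrt 3 ≠ 0 := by positivity
  fin_cases i <;> fin_cases j <;> simp [bc, ptA, ev, sgMap] <;> field_simp <;> ring

lemma bc_inj {x y : Pt} (h : bc x = bc y) : x = y := by
  have h3 : Real.sqrt 3 ≠ 0 := by positivity
  have h1 := congrFun h 1
  have h2 := congrFun h 2
  simp only [bc] at h1 h2
  simp at h1 h2
  have e1 : x 1 = y 1 := by
    exact h2
  ext j
  fin_cases j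
  · simp; rw [e1] at h1; linarith
  · exact e1

lemma bc_sum (z : Pt) : bc z 0 + bc z 1 + bc z 2 = 1 := by
  simp [bc]; ring

lemma bc_cont : Continuous bc := by
  unfold bc
  refine continuous_pi fun j => ?_
  fin_cases j <;> simp <;> fun_prop

lemma coord_le (z : Pt) (k : Fin 2) : |z k| ≤ ‖z‖ := by
  simpa using PiLp.norm_apply_le z k

lemma bc_lip (x y : Pt) (j : Fin 3) : |bc x j - bc y j| ≤ 2 * ‖x - y‖ := by
  have h3 : (1:ℝ) ≤ Real.sqrt 3 := by
    rw [show (1:ℝ) = Real.sqrt 1 by simp]; exact Real.sqrt_le_sqrt (by norm_num)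
  have h0 := coord_le (x - y) 0
  have h1 := coord_le (x - y) 1
  have h2 : |(x - y) 1 / Real.sqrt 3| ≤ ‖x - y‖ := by
    rw [abs_div, abs_of_pos (by linarith : 0 < Real.sqrt 3)]
    exact (div_le_self (abs_nonneg _) h3).trans h1
  have e : (x - y) 1 / Real.sqrt 3 = x 1 / Real.sqrt 3 - y 1 / Real.sqrt 3 := by
    simp [sub_div]
  have e0 : (x - y) 0 = x 0 - y 0 := by simp
  rw [e] at h2
  rw [e0] at h0
  rw [abs_le] at *
  fin_cases j <;> simp [bc] <;> constructor <;> linarith [h0.1, h0.2, h2.1, h2.2]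

lemma sgMap_sub (i : Fin 3) (x y : Pt) : ‖sgMap i x - sgMap i y‖ = ‖x - y‖ / 2 := by
  unfold sgMap
  rw [← smul_sub, norm_smul]
  simp
  ring

lemma sgMap_inj (i : Fin 3) : Function.Injective (sgMap i) := by
  intro x y h
  have := sgMap_sub i x y
  rw [h] at this
  simp only [sub_self, norm_zero] at this
  exact sub_eq_zero.1 (norm_eq_zero.1 (by linarith))

lemma sgMap_cont (i : Fin 3) : Continuous (sgMap i) := by
  unfold sgMap; fun_prop

lemma sgMap_swap (i j : Fin 3) : sgMap i (ptA j) = sgMap j (ptA i) := by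
  unfold sgMap; rw [add_comm]

lemma sgMap_self (i : Fin 3) : sgMap i (ptA i) = ptA i := by
  apply bc_inj
  funext j
  rw [bc_sgMap, bc_ptA]; ring

lemma mem_Vn_succ {n : ℕ} {x : Pt} : x ∈ Vn (n + 1) ↔ ∃ i, ∃ y ∈ Vn n, sgMap i y = x := by
  simp [Vn, Fin.exists_fin_succ]

lemma mem_Vn_zero {x : Pt} : x ∈ Vn 0 ↔ ∃ i, x = ptA i := by
  simp [Vn, Fin.exists_fin_succ]

lemma ptA_mem_Vn (n : ℕ) (i : Fin 3) : ptA i ∈ Vn n := by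
  induction n with
  | zero => exact mem_Vn_zero.2 ⟨i, rfl⟩
  | succ n ih => exact mem_Vn_succ.2 ⟨i, _, ih, sgMap_self i⟩

lemma ptA_mem (i : Fin 3) : ptA i ∈ sg := Vn_subset_sg (ptA_mem_Vn 0 i)

lemma bc_nonneg {x : Pt} (hx : x ∈ sg) (j : Fin 3) : 0 ≤ bc x j := by
  have hc : IsClosed {x : Pt | 0 ≤ bc x j} :=
    isClosed_le continuous_const ((continuous_apply j).comp bc_cont)
  refine closure_minimal ?_ hc hx
  intro y hy
  obtain ⟨n, hn⟩ := mem_iUnion.1 hy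
  have : ∀ n, ∀ y ∈ Vn n, 0 ≤ bc y j := by
    intro n
    induction n with
    | zero =>
      intro y hy
      obtain ⟨i, rfl⟩ := mem_Vn_zero.1 hy
      rw [bc_ptA]; unfold ev; split_ifs <;> norm_num
    | succ n ih =>
      intro y hy
      obtain ⟨i, z, hz, rfl⟩ := mem_Vn_succ.1 hy
      rw [bc_sgMap]
      have := ih z hz
      unfold ev; split_ifs <;> linarith
  exact this n y hn

lemma norm_le_sg {x : Pt} (hx : x ∈ sg) : ‖x‖ ≤ 1 := by
  have hc : IsClosed {x : Pt | ‖x‖ ≤ 1} := isClosed_le continuous_norm continuous_const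
  have hA : ∀ i, ‖ptA i‖ ≤ 1 := by
    intro i
    rw [EuclideanSpace.norm_eq]
    refine Real.sqrt_le_one.2 ?_
    fin_cases i <;> simp [ptA, Fin.sum_univ_two, div_pow] <;> norm_num
  refine closure_minimal ?_ hc hx
  intro y hy
  obtain ⟨n, hn⟩ := mem_iUnion.1 hy
  have : ∀ n, ∀ y ∈ Vn n, ‖y‖ ≤ 1 := by
    intro n
    induction n with
    | zero =>
      intro y hy
      obtain ⟨i, rfl⟩ := mem_Vn_zero.1 hy
      exact hA i
    | succ n ih =>
      intro y hy
      obtain ⟨i, z, hz, rfl⟩ := mem_Vn_succ.1 hy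
      unfold sgMap
      rw [norm_smul]
      have := norm_add_le z (ptA i)
      have := ih z hz
      have := hA i
      simp
      linarith
  exact this n y hn

lemma isCompact_sg : IsCompact sg :=
  Metric.isCompact_of_isClosed_isBounded isClosed_closure
    (Metric.isBounded_closedBall.subset (s := sg) (t := Metric.closedBall 0 1)
      fun x hx => by simpa using norm_le_sg hx)

instance instCompactSg : CompactSpace sg := isCompact_iff_compactSpace.1 isCompact_sg

lemma sgMap_mem (i : Fin 3) {x : Pt} (hx : x ∈ sg) : sgMap i x ∈ sg := by
  refine map_mem_closure (sgMap_cont i) hx ?_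
  intro y hy
  obtain ⟨n, hn⟩ := mem_iUnion.1 hy
  exact mem_iUnion.2 ⟨n + 1, mem_Vn_succ.2 ⟨i, y, hn, rfl⟩⟩

lemma exists_sgMap {x : Pt} (hx : x ∈ sg) : ∃ i, ∃ y ∈ sg, sgMap i y = x := by
  have hc : IsClosed (⋃ i : Fin 3, sgMap i '' sg) :=
    isClosed_iUnion_of_finite fun i => (isCompact_sg.image (sgMap_cont i)).isClosed
  have : x ∈ ⋃ i : Fin 3, sgMap i '' sg := by
    refine closure_minimal ?_ hc hx
    intro y hy
    obtain ⟨n, hn⟩ := mem_iUnion.1 hy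
    rcases n with _ | n
    · obtain ⟨i, rfl⟩ := mem_Vn_zero.1 hn
      exact mem_iUnion.2 ⟨i, _, ptA_mem i, sgMap_self i⟩
    · obtain ⟨i, z, hz, rfl⟩ := mem_Vn_succ.1 hn
      exact mem_iUnion.2 ⟨i, z, Vn_subset_sg hz, rfl⟩
  simpa using this

lemma bc_eq_one {x : Pt} (hx : x ∈ sg) {j : Fin 3} (h : 1 ≤ bc x j) : x = ptA j := by
  apply bc_inj
  have h0 := bc_nonneg hx 0
  have h1 := bc_nonneg hx 1
  have h2 := bc_nonneg hx 2
  have hs := bc_sum x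
  rw [bc_ptA]
  funext k
  fin_cases j <;> fin_cases k <;> simp [ev] at * <;> linarith

lemma bc_le_one {x : Pt} (hx : x ∈ sg) (j : Fin 3) : bc x j ≤ 1 := by
  have h0 := bc_nonneg hx 0
  have h1 := bc_nonneg hx 1
  have h2 := bc_nonneg hx 2
  have hs := bc_sum x
  fin_cases j <;> simp at * <;> linarith

lemma pair_sum_le {x : Pt} (hx : x ∈ sg) {i j : Fin 3} (hij : i ≠ j) : bc x i + bc x j ≤ 1 := by
  have h0 := bc_nonneg hx 0
  have h1 := bc_nonneg hx 1
  have h2 := bc_nonneg hx 2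
  have hs := bc_sum x
  fin_cases i <;> fin_cases j <;> simp at * <;> linarith

lemma junction {i j : Fin 3} (hij : i ≠ j) {x y : Pt} (hx : x ∈ sg) (hy : y ∈ sg)
    (h : sgMap i x = sgMap j y) : x = ptA j ∧ y = ptA i := by
  have hi := bc_sgMap i x i
  have hj := bc_sgMap i x j
  have hi' := bc_sgMap j y i
  have hj' := bc_sgMap j y j
  rw [h] at hi hj
  simp only [ev, if_true, if_neg hij, if_neg hij.symm] at *
  have := pair_sum_le hx hij
  have := pair_sum_le hy hij
  have := bc_nonneg hx i
  have := bc_nonneg hx j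
  have := bc_nonneg hy i
  have := bc_nonneg hy j
  exact ⟨bc_eq_one hx (by linarith), bc_eq_one hy (by linarith)⟩

/-! ### The harmonic matrices and the harmonic coordinates -/

/-- The contraction of `ℝ³` giving the harmonic coordinates on the cell `i`. -/
def AA (i : Fin 3) (p : Fin 3 → ℝ) : Fin 3 → ℝ :=
  match i with
  | 0 => ![3 / 5 * p 0 + 2 / 5, 2 / 5 * p 1 + 1 / 5 * p 2, 1 / 5 * p 1 + 2 / 5 * p 2]
  | 1 => ![2 / 5 * p 0 + 1 / 5 * p 2, 3 / 5 * p 1 + 2 / 5, 1 / 5 * p 0 + 2 / 5 * p 2]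
  | 2 => ![2 / 5 * p 0 + 1 / 5 * p 1, 1 / 5 * p 0 + 2 / 5 * p 1, 3 / 5 * p 2 + 2 / 5]

lemma AA_ev_self (i : Fin 3) : AA i (ev i) = ev i := by
  funext j
  fin_cases i <;> fin_cases j <;> simp [AA, ev] <;> norm_num

lemma AA_swap (i j : Fin 3) : AA i (ev j) = AA j (ev i) := by
  funext k
  fin_cases i <;> fin_cases j <;> fin_cases k <;> simp [AA, ev]

lemma AA_cont (i : Fin 3) : Continuous (AA i) := by
  refine continuous_pi fun j => ?_
  fin_cases i <;> fin_cases j <;> simp [AA] <;> fun_prop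

lemma AA_lip (i : Fin 3) (p q : Fin 3 → ℝ) : dist (AA i p) (AA i q) ≤ 3 / 5 * dist p q := by
  have h : ∀ k, |p k - q k| ≤ dist p q := fun k => by
    rw [← Real.dist_eq]; exact dist_le_pi_dist p q k
  have h0 := abs_le.1 (h 0)
  have h1 := abs_le.1 (h 1)
  have h2 := abs_le.1 (h 2)
  rw [dist_pi_le_iff (by positivity)]
  intro j
  rw [Real.dist_eq, abs_le]
  fin_cases i <;> fin_cases j <;> simp [AA] <;> constructor <;>
    linarith [h0.1, h0.2, h1.1, h1.2, h2.1, h2.2]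

lemma AA_sum (i : Fin 3) (p : Fin 3 → ℝ) (hp : p 0 + p 1 + p 2 = 1) :
    AA i p 0 + AA i p 1 + AA i p 2 = 1 := by
  fin_cases i <;> simp [AA] <;> linarith

lemma AA_nonneg (i : Fin 3) (p : Fin 3 → ℝ) (hp : ∀ k, 0 ≤ p k) (k : Fin 3) :
    0 ≤ AA i p k := by
  have h0 := hp 0
  have h1 := hp 1
  have h2 := hp 2
  fin_cases i <;> fin_cases k <;> simp [AA] <;> linarith

lemma AA_inj (i : Fin 3) {p q : Fin 3 → ℝ} (h : AA i p = AA i q) : p = q := by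
  have h0 := congrFun h 0
  have h1 := congrFun h 1
  have h2 := congrFun h 2
  funext k
  fin_cases i <;> fin_cases k <;> simp [AA] at * <;> linarith

lemma AA_junction_aux {i j : Fin 3} (hij : i ≠ j) {p q : Fin 3 → ℝ}
    (hp : ∀ k, 0 ≤ p k) (hq : ∀ k, 0 ≤ q k) (hps : p 0 + p 1 + p 2 = 1)
    (hqs : q 0 + q 1 + q 2 = 1) (h : AA i p = AA j q) (k : Fin 3) : p k = ev j k := by
  have h0 := congrFun h 0
  have h1 := congrFun h 1
  have h2 := congrFun h 2
  have p0 := hp 0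
  have p1 := hp 1
  have p2 := hp 2
  have q0 := hq 0
  have q1 := hq 1
  have q2 := hq 2
  clear h hp hq
  fin_cases i <;> fin_cases j <;> first
    | exact absurd rfl hij
    | (simp [AA] at h0 h1 h2
       fin_cases k <;> simp [ev] <;> linarith)

/-- Two harmonic cells meet only at the junction point. -/
lemma AA_junction {i j : Fin 3} (hij : i ≠ j) {p q : Fin 3 → ℝ}
    (hp : ∀ k, 0 ≤ p k) (hq : ∀ k, 0 ≤ q k) (hps : p 0 + p 1 + p 2 = 1)
    (hqs : q 0 + q 1 + q 2 = 1) (h : AA i p = AA j q) : p = ev j ∧ q = ev i :=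
  ⟨funext (AA_junction_aux hij hp hq hps hqs h),
    funext (AA_junction_aux hij.symm hq hp hqs hps h.symm)⟩

/-- The defining properties of the space in which we look for the harmonic coordinates. -/
def HProp (h : C(sg, Fin 3 → ℝ)) : Prop :=
  (∀ i, h ⟨ptA i, ptA_mem i⟩ = ev i) ∧ (∀ x, h x 0 + h x 1 + h x 2 = 1) ∧ ∀ x k, 0 ≤ h x k

lemma HProp_closed : IsClosed {h : C(sg, Fin 3 → ℝ) | HProp h} := by
  have hev : ∀ x : sg, Continuous fun h : C(sg, Fin 3 → ℝ) => h x := fun x =>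
    ContinuousEvalConst.continuous_eval_const x
  have hev' : ∀ (x : sg) (k : Fin 3), Continuous fun h : C(sg, Fin 3 → ℝ) => h x k :=
    fun x k => (continuous_apply k).comp (hev x)
  simp only [HProp, Set.ofPred_and, Set.ofPred_forall]
  refine (isClosed_iInter fun i => isClosed_eq (hev _) continuous_const).inter
    ((isClosed_iInter fun x => isClosed_eq ?_ continuous_const).inter
      (isClosed_iInter fun x => isClosed_iInter fun k => isClosed_le continuous_const (hev' x k)))
  exact ((hev' x 0).add (hev' x 1)).add (hev' x 2)

lemma HProp_bc : HProp ⟨fun x : sg => bc x, bc_cont.comp continuous_subtype_val⟩ :=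
  ⟨fun i => bc_ptA i, fun x => bc_sum x, fun x k => bc_nonneg x.2 k⟩

lemma exists_step (h : C(sg, Fin 3 → ℝ)) (hh : HProp h) :
    ∃ g : C(sg, Fin 3 → ℝ), HProp g ∧
      ∀ i (x : sg), g ⟨sgMap i x, sgMap_mem i x.2⟩ = AA i (h x) := by
  let F : C(Fin 3 × sg, sg) := ⟨fun z => ⟨sgMap z.1 z.2, sgMap_mem z.1 z.2.2⟩, by
    refine continuous_prod_of_discrete_left.2 fun i => ?_
    exact ((sgMap_cont i).comp continuous_subtype_val).subtype_mk _⟩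
  let G : C(Fin 3 × sg, Fin 3 → ℝ) := ⟨fun z => AA z.1 (h z.2), by
    refine continuous_prod_of_discrete_left.2 fun i => ?_
    exact (AA_cont i).comp h.continuous⟩
  have hs : Function.Surjective F := by
    rintro ⟨x, hx⟩
    obtain ⟨i, y, hy, rfl⟩ := exists_sgMap hx
    exact ⟨(i, ⟨y, hy⟩), rfl⟩
  have hq : IsQuotientMap F := IsQuotientMap.of_surjective_continuous hs F.continuous
  have hf : Function.FactorsThrough G F := by
    rintro ⟨i, x, hx⟩ ⟨j, y, hy⟩ e
    have e' : sgMap i x = sgMap j y := congrArg Subtype.val e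
    show AA i (h ⟨x, hx⟩) = AA j (h ⟨y, hy⟩)
    by_cases hij : i = j
    · subst hij
      have := sgMap_inj i e'
      subst this
      rfl
    · obtain ⟨rfl, rfl⟩ := junction hij hx hy e'
      rw [hh.1, hh.1, AA_swap]
  have key : ∀ i (x : sg), hq.lift G hf ⟨sgMap i x, sgMap_mem i x.2⟩ = AA i (h x) := by
    intro i x
    exact DFunLike.congr_fun (hq.lift_comp G hf) (i, x)
  refine ⟨hq.lift G hf, ⟨?_, ?_, ?_⟩, key⟩
  · intro i
    have := key i ⟨ptA i, ptA_mem i⟩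
    rw [hh.1, AA_ev_self] at this
    rw [← this]
    congr 1
    exact Subtype.ext (sgMap_self i).symm
  · rintro ⟨x, hx⟩
    obtain ⟨i, y, hy, rfl⟩ := exists_sgMap hx
    rw [key i ⟨y, hy⟩]
    exact AA_sum i _ (hh.2.1 _)
  · rintro ⟨x, hx⟩ k
    obtain ⟨i, y, hy, rfl⟩ := exists_sgMap hx
    rw [key i ⟨y, hy⟩]
    exact AA_nonneg i _ (hh.2.2 _) k

lemma exists_harm : ∃ h : C(sg, Fin 3 → ℝ), HProp h ∧
    ∀ i (x : sg), h ⟨sgMap i x, sgMap_mem i x.2⟩ = AA i (h x) := by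
  choose T hT hT' using exists_step
  let X := {h : C(sg, Fin 3 → ℝ) // HProp h}
  have : CompleteSpace X := (HProp_closed.isComplete).completeSpace_coe
  have : Nonempty X := ⟨⟨_, HProp_bc⟩⟩
  let S : X → X := fun h => ⟨T h.1 h.2, hT h.1 h.2⟩
  have hc : ContractingWith (3 / 5 : ℝ≥0) S := by
    refine ⟨?_, LipschitzWith.of_dist_le_mul fun f g => ?_⟩
    · rw [div_lt_one (by norm_num)]; norm_num
    · show dist (T f.1 f.2) (T g.1 g.2) ≤ _
      rw [ContinuousMap.dist_le (by positivity)]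
      rintro ⟨x, hx⟩
      obtain ⟨i, y, hy, rfl⟩ := exists_sgMap hx
      rw [hT' f.1 f.2 i ⟨y, hy⟩, hT' g.1 g.2 i ⟨y, hy⟩]
      refine (AA_lip _ _ _).trans ?_
      have : ((3 / 5 : ℝ≥0) : ℝ) = 3 / 5 := by push_cast; rfl
      rw [this]
      gcongr
      exact ContinuousMap.dist_apply_le_dist _
  have hfix : S (ContractingWith.fixedPoint S hc) = ContractingWith.fixedPoint S hc :=
    hc.fixedPoint_isFixedPt
  generalize ContractingWith.fixedPoint S hc = h0 at hfix
  obtain ⟨h, hh⟩ := h0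
  have e : T h hh = h := congrArg Subtype.val hfix
  refine ⟨h, hh, fun i x => ?_⟩
  conv_lhs => rw [← e]
  exact hT' h hh i x

/-- The harmonic coordinates on the gasket. -/
def harm : C(sg, Fin 3 → ℝ) := Classical.choose exists_harm

/-- Extension by zero of the harmonic coordinates. -/
def HE (x : Pt) : Fin 3 → ℝ := if hx : x ∈ sg then harm ⟨x, hx⟩ else 0

lemma HE_of_mem {x : Pt} (hx : x ∈ sg) : HE x = harm ⟨x, hx⟩ := dif_pos hx

lemma HE_rec (i : Fin 3) {x : Pt} (hx : x ∈ sg) : HE (sgMap i x) = AA i (HE x) := by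
  rw [HE_of_mem hx, HE_of_mem (sgMap_mem i hx)]
  exact (Classical.choose_spec exists_harm).2 i ⟨x, hx⟩

lemma HE_ptA (i : Fin 3) : HE (ptA i) = ev i := by
  rw [HE_of_mem (ptA_mem i)]
  exact (Classical.choose_spec exists_harm).1.1 i

lemma HE_sum {x : Pt} (hx : x ∈ sg) : HE x 0 + HE x 1 + HE x 2 = 1 := by
  rw [HE_of_mem hx]
  exact (Classical.choose_spec exists_harm).1.2.1 _

lemma HE_nonneg {x : Pt} (hx : x ∈ sg) (k : Fin 3) : 0 ≤ HE x k := by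
  rw [HE_of_mem hx]
  exact (Classical.choose_spec exists_harm).1.2.2 _ k

/-! ### Injectivity of the harmonic coordinates -/

lemma ev_apply_self (i : Fin 3) : ev i i = 1 := by simp [ev]

lemma AA_off {i j : Fin 3} (hij : i ≠ j) {p : Fin 3 → ℝ} (hp : ∀ k, 0 ≤ p k)
    (hps : p 0 + p 1 + p 2 = 1) : AA i p j < 1 := by
  have p0 := hp 0
  have p1 := hp 1
  have p2 := hp 2
  fin_cases i <;> fin_cases j <;> first
    | exact absurd rfl hij
    | (simp [AA]; linarith)

lemma HE_eq_ev_aux (j : Fin 3) (n : ℕ) : ∀ x ∈ sg, HE x = ev j →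
    ‖x - ptA j‖ ≤ 2 * (1 / 2) ^ n := by
  induction n with
  | zero =>
    intro x hx _
    have := norm_sub_le x (ptA j)
    have := norm_le_sg hx
    have := norm_le_sg (ptA_mem j)
    simp; linarith
  | succ n ih =>
    intro x hx h
    obtain ⟨i, y, hy, rfl⟩ := exists_sgMap hx
    rw [HE_rec i hy] at h
    by_cases hij : i = j
    · subst hij
      have h2 : HE y = ev i := AA_inj i (h.trans (AA_ev_self i).symm)
      have := ih y hy h2
      rw [← sgMap_self i, sgMap_sub, pow_succ]
      linarith
    · have := AA_off hij (HE_nonneg hy) (HE_sum hy)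
      rw [h, ev_apply_self] at this
      exact absurd this (lt_irrefl _)

lemma eq_of_forall_pow {x y : Pt} (h : ∀ n : ℕ, ‖x - y‖ ≤ 2 * (1 / 2) ^ n) : x = y := by
  have ht : Tendsto (fun n : ℕ => 2 * (1 / 2 : ℝ) ^ n) atTop (𝓝 (2 * 0)) :=
    (tendsto_pow_atTop_nhds_zero_of_lt_one (by norm_num) (by norm_num)).const_mul 2
  have := ge_of_tendsto' ht h
  rw [mul_zero] at this
  exact sub_eq_zero.1 (norm_le_zero_iff.1 this)

lemma HE_eq_ev (j : Fin 3) {x : Pt} (hx : x ∈ sg) (h : HE x = ev j) : x = ptA j :=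
  eq_of_forall_pow fun n => HE_eq_ev_aux j n x hx h

lemma HE_inj_aux (n : ℕ) : ∀ x ∈ sg, ∀ y ∈ sg, HE x = HE y → ‖x - y‖ ≤ 2 * (1 / 2) ^ n := by
  induction n with
  | zero =>
    intro x hx y hy _
    have := norm_sub_le x y
    have := norm_le_sg hx
    have := norm_le_sg hy
    simp; linarith
  | succ n ih =>
    intro x hx y hy h
    obtain ⟨i, x, hx', rfl⟩ := exists_sgMap hx
    obtain ⟨j, y, hy', rfl⟩ := exists_sgMap hy
    rw [HE_rec i hx', HE_rec j hy'] at h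
    by_cases hij : i = j
    · subst hij
      have := ih x hx' y hy' (AA_inj i h)
      rw [sgMap_sub, pow_succ]
      linarith
    · obtain ⟨h1, h2⟩ := AA_junction hij (HE_nonneg hx') (HE_nonneg hy') (HE_sum hx')
        (HE_sum hy') h
      rw [HE_eq_ev j hx' h1, HE_eq_ev i hy' h2, sgMap_swap]
      simp

lemma HE_inj {x y : Pt} (hx : x ∈ sg) (hy : y ∈ sg) (h : HE x = HE y) : x = y :=
  eq_of_forall_pow fun n => HE_inj_aux n x hx y hy h

/-! ### Points near a corner -/

/-- The points of `V_n` close to the corner `a_j`. -/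
def Sn (n : ℕ) (j : Fin 3) : Finset Pt := (Vn n).filter fun x => 1 - 2 * (1 / 2 : ℝ) ^ n ≤ bc x j

lemma Sn_succ (n : ℕ) (hn : 1 ≤ n) (j : Fin 3) {x : Pt} (hx : x ∈ Sn (n + 1) j) :
    ∃ y ∈ Sn n j, sgMap j y = x := by
  obtain ⟨hxV, hb⟩ := Finset.mem_filter.1 hx
  obtain ⟨i, y, hy, rfl⟩ := mem_Vn_succ.1 hxV
  have hys := Vn_subset_sg hy
  have hr : (1 / 2 : ℝ) ^ n ≤ 1 / 2 := by
    calc (1 / 2 : ℝ) ^ n ≤ (1 / 2) ^ 1 := pow_le_pow_of_le_one (by norm_num) (by norm_num) hn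
      _ = 1 / 2 := pow_one _
  have hr0 : (0 : ℝ) < (1 / 2 : ℝ) ^ n := by positivity
  rw [bc_sgMap, pow_succ] at hb
  by_cases hij : j = i
  · subst hij
    rw [ev_apply_self] at hb
    exact ⟨y, Finset.mem_filter.2 ⟨hy, by linarith⟩, rfl⟩
  · simp only [ev, if_neg hij] at hb
    have e := bc_eq_one hys (j := j) (by linarith)
    have := bc_le_one hys j
    subst e
    refine ⟨ptA i, Finset.mem_filter.2 ⟨ptA_mem_Vn n i, ?_⟩, sgMap_swap j i⟩
    have := bc_nonneg (ptA_mem i) j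
    linarith

lemma card_Vn_succ (n : ℕ) : (Vn (n + 1)).card ≤ 3 * (Vn n).card := by
  simp only [Vn]
  have h1 := Finset.card_union_le ((Vn n).image (sgMap 0) ∪ (Vn n).image (sgMap 1))
    ((Vn n).image (sgMap 2))
  have h2 := Finset.card_union_le ((Vn n).image (sgMap 0)) ((Vn n).image (sgMap 1))
  have a0 := Finset.card_image_le (s := Vn n) (f := sgMap 0)
  have a1 := Finset.card_image_le (s := Vn n) (f := sgMap 1)
  have a2 := Finset.card_image_le (s := Vn n) (f := sgMap 2)
  omega

lemma card_Sn (n : ℕ) (j : Fin 3) : (Sn n j).card ≤ 9 := by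
  have h0 : (Vn 0).card ≤ 3 := Finset.card_le_three
  have h1 := card_Vn_succ 0
  induction n with
  | zero => exact (Finset.card_filter_le _ _).trans (by omega)
  | succ n ih =>
    rcases Nat.eq_zero_or_pos n with rfl | hn
    · exact (Finset.card_filter_le _ _).trans (by omega)
    · have : Sn (n + 1) j ⊆ (Sn n j).image (sgMap j) := fun x hx => by
        obtain ⟨y, hy, rfl⟩ := Sn_succ n hn j hx
        exact Finset.mem_image_of_mem _ hy
      exact ((Finset.card_le_card this).trans Finset.card_image_le).trans ih

lemma dist_HE_le_one {x : Pt} (hx : x ∈ sg) (j : Fin 3) : dist (HE x) (ev j) ≤ 1 := by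
  rw [dist_pi_le_iff (by norm_num)]
  intro k
  have h0 := HE_nonneg hx 0
  have h1 := HE_nonneg hx 1
  have h2 := HE_nonneg hx 2
  have hs := HE_sum hx
  rw [Real.dist_eq, abs_le]
  unfold ev
  fin_cases k <;> split_ifs <;> constructor <;> simp <;> linarith

lemma Sn_dist (n : ℕ) (j : Fin 3) : ∀ x ∈ Sn n j, dist (HE x) (ev j) ≤ 2 * (3 / 5) ^ n := by
  induction n with
  | zero =>
    intro x hx
    have := dist_HE_le_one (Vn_subset_sg (Finset.mem_filter.1 hx).1) j
    simp; linarith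
  | succ n ih =>
    intro x hx
    rcases Nat.eq_zero_or_pos n with rfl | hn
    · have := dist_HE_le_one (Vn_subset_sg (Finset.mem_filter.1 hx).1) j
      norm_num; linarith
    · obtain ⟨y, hy, rfl⟩ := Sn_succ n hn j hx
      rw [HE_rec j (Vn_subset_sg (Finset.mem_filter.1 hy).1), ← AA_ev_self j]
      have := AA_lip j (HE y) (ev j)
      have := ih y hy
      rw [AA_ev_self] at *
      rw [pow_succ]
      linarith

/-! ### The energy estimate -/

/-- The edge sum without normalization. -/
def ES (n : ℕ) (u : Pt → ℝ) : ℝ :=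
  ∑ x ∈ Vn n, ∑ y ∈ Vn n, if isEdge n x y then (u y - u x) * (u y - u x) else 0

lemma sum_union_le' (s t : Finset Pt) (f : Pt → ℝ) (hf : ∀ x, 0 ≤ f x) :
    ∑ x ∈ s ∪ t, f x ≤ ∑ x ∈ s, f x + ∑ x ∈ t, f x := by
  rw [← Finset.sum_union_inter]
  have : 0 ≤ ∑ x ∈ s ∩ t, f x := Finset.sum_nonneg fun x _ => hf x
  linarith

lemma sum_Vn_succ_le (n : ℕ) (f : Pt → ℝ) (hf : ∀ x, 0 ≤ f x) :
    ∑ x ∈ Vn (n + 1), f x ≤ ∑ i : Fin 3, ∑ x ∈ Vn n, f (sgMap i x) := by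
  have him : ∀ i, ∑ x ∈ (Vn n).image (sgMap i), f x = ∑ x ∈ Vn n, f (sgMap i x) := fun i =>
    Finset.sum_image fun x _ y _ h => sgMap_inj i h
  simp only [Vn]
  refine (sum_union_le' _ _ f hf).trans ?_
  have := sum_union_le' ((Vn n).image (sgMap 0)) ((Vn n).image (sgMap 1)) f hf
  rw [him, him] at this
  rw [him, Fin.sum_univ_three]
  linarith

/-- A linear form on `ℝ³`. -/
def lin (a p : Fin 3 → ℝ) : ℝ := a 0 * p 0 + a 1 * p 1 + a 2 * p 2

/-- The energy of a function on `V₀`. -/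
def qq (a : Fin 3 → ℝ) : ℝ := (a 0 - a 1) ^ 2 + (a 1 - a 2) ^ 2 + (a 2 - a 0) ^ 2

/-- The transposed linear part of `AA i`. -/
def BB (i : Fin 3) (a : Fin 3 → ℝ) : Fin 3 → ℝ :=
  match i with
  | 0 => ![a 0, 2 / 5 * a 0 + 2 / 5 * a 1 + 1 / 5 * a 2, 2 / 5 * a 0 + 1 / 5 * a 1 + 2 / 5 * a 2]
  | 1 => ![2 / 5 * a 0 + 2 / 5 * a 1 + 1 / 5 * a 2, a 1, 1 / 5 * a 0 + 2 / 5 * a 1 + 2 / 5 * a 2]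
  | 2 => ![2 / 5 * a 0 + 1 / 5 * a 1 + 2 / 5 * a 2, 1 / 5 * a 0 + 2 / 5 * a 1 + 2 / 5 * a 2, a 2]

lemma lin_AA (i : Fin 3) (a p : Fin 3 → ℝ) (hp : p 0 + p 1 + p 2 = 1) :
    lin a (AA i p) = lin (BB i a) p := by
  have : p 0 = 1 - p 1 - p 2 := by linarith
  fin_cases i <;> simp [lin, AA, BB, this] <;> ring

lemma qq_BB (a : Fin 3 → ℝ) : ∑ i, qq (BB i a) = 3 / 5 * qq a := by
  simp [Fin.sum_univ_three, qq, BB]; ring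

lemma qq_nonneg (a : Fin 3 → ℝ) : 0 ≤ qq a := by unfold qq; positivity

lemma lin_diff (a p q : Fin 3 → ℝ) (hp : p 0 + p 1 + p 2 = 1) (hq : q 0 + q 1 + q 2 = 1)
    {r : ℝ} (h : dist p q ≤ r) :
    (lin a p - lin a q) * (lin a p - lin a q) ≤ 2 * qq a * r ^ 2 := by
  have hk : ∀ k, (p k - q k) ^ 2 ≤ r ^ 2 := fun k => by
    have : |p k - q k| ≤ r := by
      rw [← Real.dist_eq]; exact (dist_le_pi_dist p q k).trans h
    exact sq_le_sq' (abs_le.1 this).1 (abs_le.1 this).2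
  have e : lin a p - lin a q = (a 0 - a 1) * (p 0 - q 0) - (a 1 - a 2) * (p 2 - q 2) := by
    have h1 : p 1 = 1 - p 0 - p 2 := by linarith
    have h2 : q 1 = 1 - q 0 - q 2 := by linarith
    simp only [lin, h1, h2]; ring
  rw [e]
  have h0 := mul_le_mul_of_nonneg_left (hk 0) (sq_nonneg (a 0 - a 1))
  have h2 := mul_le_mul_of_nonneg_left (hk 2) (sq_nonneg (a 1 - a 2))
  have h3 := mul_nonneg (sq_nonneg (a 2 - a 0)) (sq_nonneg r)
  have h4 := sq_nonneg ((a 0 - a 1) * (p 0 - q 0) + (a 1 - a 2) * (p 2 - q 2))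
  unfold qq
  nlinarith

lemma isEdge_diag (n : ℕ) (i : Fin 3) (x y : Pt) :
    isEdge (n + 1) (sgMap i x) (sgMap i y) ↔ isEdge n x y := by
  unfold isEdge
  have e : (2 : ℝ) ^ (-((n + 1 : ℕ) : ℤ)) = (2 : ℝ) ^ (-(n : ℤ)) / 2 := by
    rw [zpow_neg, zpow_neg, zpow_natCast, zpow_natCast, pow_succ]
    field_simp
  rw [sgMap_sub, e]
  constructor <;> intro h <;> linarith

lemma isEdge_cross (n : ℕ) {i j : Fin 3} (hij : i ≠ j) {x y : Pt} (hx : x ∈ Vn n)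
    (hy : y ∈ Vn n) (h : isEdge (n + 1) (sgMap i x) (sgMap j y)) : x ∈ Sn n j := by
  refine Finset.mem_filter.2 ⟨hx, ?_⟩
  have e : (2 : ℝ) ^ (-((n + 1 : ℕ) : ℤ)) = (1 / 2 : ℝ) ^ n / 2 := by
    rw [zpow_neg, zpow_natCast, pow_succ, one_div, inv_pow]
    field_simp
  unfold isEdge at h
  have hl := bc_lip (sgMap i x) (sgMap j y) j
  rw [h, e, bc_sgMap, bc_sgMap, ev_apply_self] at hl
  simp only [ev, if_neg hij.symm] at hl
  have := (abs_le.1 hl).1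
  have := bc_nonneg (Vn_subset_sg hy) j
  linarith

lemma isEdge_symm {n : ℕ} {x y : Pt} (h : isEdge n x y) : isEdge n y x := by
  unfold isEdge at *; rw [norm_sub_rev]; exact h

/-- One summand of the edge sum. -/
def tm (n : ℕ) (u : Pt → ℝ) (x y : Pt) : ℝ :=
  if isEdge n x y then (u y - u x) * (u y - u x) else 0

lemma tm_nonneg (n : ℕ) (u : Pt → ℝ) (x y : Pt) : 0 ≤ tm n u x y := by
  unfold tm; split_ifs
  · exact mul_self_nonneg _
  · exact le_rfl

lemma ES_succ_le (n : ℕ) (u : Pt → ℝ) : ES (n + 1) u ≤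
    ∑ i : Fin 3, ∑ j : Fin 3, ∑ x ∈ Vn n, ∑ y ∈ Vn n, tm (n + 1) u (sgMap i x) (sgMap j y) := by
  have h1 : ES (n + 1) u ≤ ∑ i : Fin 3, ∑ x ∈ Vn n, ∑ y ∈ Vn (n + 1), tm (n + 1) u (sgMap i x) y :=
    sum_Vn_succ_le n (fun x => ∑ y ∈ Vn (n + 1), tm (n + 1) u x y)
      fun x => Finset.sum_nonneg fun y _ => tm_nonneg _ _ _ _
  refine h1.trans (Finset.sum_le_sum fun i _ => ?_)
  rw [Finset.sum_comm (s := (Finset.univ : Finset (Fin 3)))]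
  refine Finset.sum_le_sum fun x _ => ?_
  exact sum_Vn_succ_le n (fun y => tm (n + 1) u (sgMap i x) y) fun y => tm_nonneg _ _ _ _

lemma diag_sum (n : ℕ) (a : Fin 3 → ℝ) (i : Fin 3) :
    ∑ x ∈ Vn n, ∑ y ∈ Vn n, tm (n + 1) (fun z => lin a (HE z)) (sgMap i x) (sgMap i y) =
      ES n (fun z => lin (BB i a) (HE z)) := by
  unfold ES
  refine Finset.sum_congr rfl fun x hx => Finset.sum_congr rfl fun y hy => ?_
  have hx' := Vn_subset_sg hx
  have hy' := Vn_subset_sg hy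
  simp only [tm, isEdge_diag, HE_rec i hx', HE_rec i hy', lin_AA i a _ (HE_sum hx'),
    lin_AA i a _ (HE_sum hy')]

lemma cross_sum (n : ℕ) (a : Fin 3 → ℝ) {i j : Fin 3} (hij : i ≠ j) :
    ∑ x ∈ Vn n, ∑ y ∈ Vn n, tm (n + 1) (fun z => lin a (HE z)) (sgMap i x) (sgMap j y) ≤
      2592 * qq a * ((3 / 5) ^ (n + 1)) ^ 2 := by
  set K : ℝ := 2 * qq a * (4 * (3 / 5) ^ (n + 1)) ^ 2 with hK
  have hK0 : 0 ≤ K := by have := qq_nonneg a; positivity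
  have hterm : ∀ x ∈ Vn n, ∀ y ∈ Vn n,
      tm (n + 1) (fun z => lin a (HE z)) (sgMap i x) (sgMap j y) ≤
        (if x ∈ Sn n j then 1 else 0) * ((if y ∈ Sn n i then 1 else 0) * K) := by
    intro x hx y hy
    unfold tm
    by_cases he : isEdge (n + 1) (sgMap i x) (sgMap j y)
    · have h1 := isEdge_cross n hij hx hy he
      have h2 := isEdge_cross n hij.symm hy hx (isEdge_symm he)
      rw [if_pos he, if_pos h1, if_pos h2, one_mul, one_mul]
      have hx' := Vn_subset_sg hx
      have hy' := Vn_subset_sg hy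
      refine lin_diff a _ _ (HE_sum (sgMap_mem j hy')) (HE_sum (sgMap_mem i hx')) ?_
      rw [HE_rec i hx', HE_rec j hy']
      have d1 := (AA_lip i (HE x) (ev j)).trans
        (mul_le_mul_of_nonneg_left (Sn_dist n j x h1) (by norm_num))
      have d2 := (AA_lip j (HE y) (ev i)).trans
        (mul_le_mul_of_nonneg_left (Sn_dist n i y h2) (by norm_num))
      have d3 := dist_triangle_right (AA j (HE y)) (AA i (HE x)) (AA j (ev i))
      rw [← AA_swap i j] at d3 d2
      rw [pow_succ]
      linarith
    · rw [if_neg he]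
      positivity
  have hc : ∀ k, ∑ x ∈ Vn n, (if x ∈ Sn n k then (1 : ℝ) else 0) ≤ 9 := by
    intro k
    rw [← Finset.sum_filter, Finset.sum_const, nsmul_eq_mul, mul_one]
    have : ((Vn n).filter fun x => x ∈ Sn n k) ⊆ Sn n k := fun x hx => (Finset.mem_filter.1 hx).2
    exact_mod_cast (Finset.card_le_card this).trans (card_Sn n k)
  have hc0 : ∀ k, 0 ≤ ∑ x ∈ Vn n, (if x ∈ Sn n k then (1 : ℝ) else 0) := fun k =>
    Finset.sum_nonneg fun x _ => by positivity
  calc _ ≤ ∑ x ∈ Vn n, ∑ y ∈ Vn n,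
        (if x ∈ Sn n j then (1 : ℝ) else 0) * ((if y ∈ Sn n i then 1 else 0) * K) :=
        Finset.sum_le_sum fun x hx => Finset.sum_le_sum fun y hy => hterm x hx y hy
    _ = (∑ x ∈ Vn n, (if x ∈ Sn n j then (1 : ℝ) else 0)) *
        ((∑ y ∈ Vn n, (if y ∈ Sn n i then (1 : ℝ) else 0)) * K) := by
        simp only [Finset.sum_mul, Finset.mul_sum]
        exact Finset.sum_comm
    _ ≤ 9 * (9 * K) := by
        gcongr
        · exact hc j
        · exact hc i
    _ = _ := by rw [hK]; ring

lemma ES_zero_le (a : Fin 3 → ℝ) : ES 0 (fun z => lin a (HE z)) ≤ 72 * qq a := by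
  have h0 : (Vn 0).card ≤ 3 := Finset.card_le_three
  have hq := qq_nonneg a
  have hterm : ∀ x ∈ Vn 0, ∀ y ∈ Vn 0,
      (if isEdge 0 x y then (lin a (HE y) - lin a (HE x)) * (lin a (HE y) - lin a (HE x)) else 0) ≤
        8 * qq a := by
    intro x hx y hy
    split_ifs
    · have hx' := Vn_subset_sg hx
      have hy' := Vn_subset_sg hy
      have := dist_triangle_right (HE y) (HE x) (ev 0)
      have := dist_HE_le_one hx' 0
      have := dist_HE_le_one hy' 0
      have := lin_diff a _ _ (HE_sum hy') (HE_sum hx') (r := 2) (by linarith)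
      linarith
    · positivity
  have hc : ((Vn 0).card : ℝ) ≤ 3 := by exact_mod_cast h0
  calc _ ≤ ∑ x ∈ Vn 0, ∑ y ∈ Vn 0, 8 * qq a :=
        Finset.sum_le_sum fun x hx => Finset.sum_le_sum fun y hy => hterm x hx y hy
    _ = (Vn 0).card * ((Vn 0).card * (8 * qq a)) := by simp
    _ ≤ 3 * (3 * (8 * qq a)) := by gcongr
    _ = _ := by ring

lemma ES_le (n : ℕ) : ∀ a : Fin 3 → ℝ, ES n (fun z => lin a (HE z)) ≤
    (72 + 15552 * (3 / 2) * (1 - (3 / 5) ^ n)) * (3 / 5) ^ n * qq a := by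
  induction n with
  | zero => intro a; simpa using ES_zero_le a
  | succ n ih =>
    intro a
    refine (ES_succ_le n _).trans ?_
    have hs := qq_BB a
    rw [Fin.sum_univ_three] at hs
    have d : ∀ i, _ := fun i => (diag_sum n a i).le.trans (ih (BB i a))
    simp only [Fin.sum_univ_three]
    have c01 := cross_sum n a (i := 0) (j := 1) (by decide)
    have c02 := cross_sum n a (i := 0) (j := 2) (by decide)
    have c10 := cross_sum n a (i := 1) (j := 0) (by decide)
    have c12 := cross_sum n a (i := 1) (j := 2) (by decide)
    have c20 := cross_sum n a (i := 2) (j := 0) (by decide)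
    have c21 := cross_sum n a (i := 2) (j := 1) (by decide)
    have d0 := d 0
    have d1 := d 1
    have d2 := d 2
    have key : (72 + 15552 * (3 / 2) * (1 - (3 / 5 : ℝ) ^ (n + 1))) * (3 / 5) ^ (n + 1) * qq a =
        (72 + 15552 * (3 / 2) * (1 - (3 / 5 : ℝ) ^ n)) * (3 / 5) ^ n *
          (qq (BB 0 a) + qq (BB 1 a) + qq (BB 2 a)) +
        6 * (2592 * qq a * ((3 / 5) ^ (n + 1)) ^ 2) := by
      rw [hs, pow_succ]; ring
    rw [key]
    linarith

lemma energy_eq (n : ℕ) (u : Pt → ℝ) : energy n u = (5 / 3 : ℝ) ^ n * (1 / 2) * ES n u := rfl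

lemma energy_lin_le (n : ℕ) (a : Fin 3 → ℝ) :
    energy n (fun z => lin a (HE z)) ≤ 12000 * qq a := by
  have h := ES_le n a
  have hq := qq_nonneg a
  have e : (5 / 3 : ℝ) ^ n * (3 / 5) ^ n = 1 := by rw [← mul_pow]; norm_num
  have h5 : (0 : ℝ) ≤ (3 / 5) ^ n := by positivity
  rw [energy_eq]
  calc _ ≤ (5 / 3 : ℝ) ^ n * (1 / 2) *
        ((72 + 15552 * (3 / 2) * (1 - (3 / 5) ^ n)) * (3 / 5) ^ n * qq a) := by gcongr
    _ = ((5 / 3 : ℝ) ^ n * (3 / 5) ^ n) * (1 / 2) *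
        (72 + 15552 * (3 / 2) * (1 - (3 / 5) ^ n)) * qq a := by ring
    _ ≤ 12000 * qq a := by
        rw [e]
        gcongr
        linarith

/-! ### The algebra of functions of finite energy -/

lemma energy_comb (n : ℕ) (w u v : Pt → ℝ) (a b : ℝ)
    (h : ∀ x ∈ Vn n, ∀ y ∈ Vn n, (w y - w x) * (w y - w x) ≤
      a * ((u y - u x) * (u y - u x)) + b * ((v y - v x) * (v y - v x))) :
    energy n w ≤ a * energy n u + b * energy n v := by
  have : ES n w ≤ a * ES n u + b * ES n v := by
    unfold ES
    simp only [Finset.mul_sum, ← Finset.sum_add_distrib]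
    refine Finset.sum_le_sum fun x hx => Finset.sum_le_sum fun y hy => ?_
    split_ifs
    · exact h x hx y hy
    · simp
  simp only [energy_eq]
  have h2 := mul_le_mul_of_nonneg_left this (by positivity : 0 ≤ (5 / 3 : ℝ) ^ n * (1 / 2))
  linarith

lemma bdd_comb {w u v : Pt → ℝ} {a b : ℝ} (ha : 0 ≤ a) (hb : 0 ≤ b)
    (hu : FiniteEnergy u) (hv : FiniteEnergy v)
    (h : ∀ x ∈ sg, ∀ y ∈ sg, (w y - w x) * (w y - w x) ≤
      a * ((u y - u x) * (u y - u x)) + b * ((v y - v x) * (v y - v x))) :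
    FiniteEnergy w := by
  obtain ⟨A, hA⟩ := hu
  obtain ⟨B, hB⟩ := hv
  refine ⟨a * A + b * B, ?_⟩
  rintro _ ⟨n, rfl⟩
  refine (energy_comb n w u v a b fun x hx y hy =>
    h x (Vn_subset_sg hx) y (Vn_subset_sg hy)).trans ?_
  have h1 : energy n u ≤ A := hA ⟨n, rfl⟩
  have h2 : energy n v ≤ B := hB ⟨n, rfl⟩
  gcongr

lemma sgExt_mem (f : C(sg, ℝ)) {x : Pt} (hx : x ∈ sg) : sgExt f x = f ⟨x, hx⟩ := dif_pos hx

lemma sgExt_bound (f : C(sg, ℝ)) {x : Pt} (hx : x ∈ sg) : (sgExt f x) ^ 2 ≤ ‖f‖ ^ 2 := by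
  rw [sgExt_mem f hx]
  have := abs_le.1 (f.norm_coe_le_norm ⟨x, hx⟩)
  exact sq_le_sq' this.1 this.2

/-- The subalgebra of functions of finite energy. -/
def feAlg : Subalgebra ℝ C(sg, ℝ) where
  carrier := {g | FiniteEnergy (sgExt g)}
  mul_mem' := by
    intro f g hf hg
    refine bdd_comb (a := 2 * ‖g‖ ^ 2) (b := 2 * ‖f‖ ^ 2) (by positivity) (by positivity) hf hg ?_
    intro x hx y hy
    have hgx := sgExt_bound g hx
    have hfy := sgExt_bound f hy
    have e : ∀ z (_ : z ∈ sg), sgExt (f * g) z = sgExt f z * sgExt g z := fun z hz => by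
      simp [sgExt_mem _ hz]
    rw [e x hx, e y hy]
    generalize sgExt f x = fx at *
    generalize sgExt f y = fy at *
    generalize sgExt g x = gx at *
    generalize sgExt g y = gy at *
    have h1 := mul_le_mul_of_nonneg_right hgx (sq_nonneg (fy - fx))
    have h2 := mul_le_mul_of_nonneg_right hfy (sq_nonneg (gy - gx))
    have h3 := sq_nonneg (fy * (gy - gx) - gx * (fy - fx))
    nlinarith
  add_mem' := by
    intro f g hf hg
    refine bdd_comb (a := 2) (b := 2) (by positivity) (by positivity) hf hg ?_
    intro x hx y hy
    have e : ∀ z (_ : z ∈ sg), sgExt (f + g) z = sgExt f z + sgExt g z := fun z hz => by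
      simp [sgExt_mem _ hz]
    rw [e x hx, e y hy]
    have := sq_nonneg ((sgExt f y - sgExt f x) - (sgExt g y - sgExt g x))
    nlinarith
  algebraMap_mem' := by
    intro r
    refine ⟨0, ?_⟩
    rintro _ ⟨n, rfl⟩
    show energy n _ ≤ 0
    have := energy_comb n (sgExt (algebraMap ℝ C(sg, ℝ) r)) 0 0 0 0 (by
      intro x hx y hy
      rw [sgExt_mem _ (Vn_subset_sg hx), sgExt_mem _ (Vn_subset_sg hy)]
      simp)
    simpa using this

/-- The `k`-th harmonic coordinate. -/
def harmC (k : Fin 3) : C(sg, ℝ) := ⟨fun x => harm x k, (continuous_apply k).comp harm.continuous⟩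

lemma harmC_mem (k : Fin 3) : harmC k ∈ feAlg := by
  have hl : ∀ p, lin (ev k) p = p k := by
    intro p
    fin_cases k <;> simp [lin, ev]
  have hf : FiniteEnergy fun z => lin (ev k) (HE z) := by
    refine ⟨12000 * qq (ev k), ?_⟩
    rintro _ ⟨n, rfl⟩
    exact energy_lin_le n (ev k)
  refine bdd_comb (a := 1) (b := 0) zero_le_one le_rfl hf hf ?_
  intro x hx y hy
  rw [sgExt_mem _ hx, sgExt_mem _ hy]
  simp only [hl, HE_of_mem hx, HE_of_mem hy]
  simp [harmC]

lemma feAlg_sep : feAlg.SeparatesPoints := by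
  intro x y hxy
  by_contra hcon
  push Not at hcon
  apply hxy
  apply Subtype.ext
  refine HE_inj x.2 y.2 ?_
  rw [HE_of_mem x.2, HE_of_mem y.2]
  funext k
  exact hcon _ ⟨harmC k, harmC_mem k, rfl⟩

/-- The set of continuous functions on `V` whose restriction to `V*` has finite
energy is dense in `C(V)`. -/
theorem statement11 :
    Dense {g : C(sg, ℝ) | BddAbove (Set.range fun n : ℕ => energy n (sgExt g))} := by
  have h := ContinuousMap.subalgebra_topologicalClosure_eq_top_of_separatesPoints feAlg feAlg_sep
  have h2 : Dense (feAlg : Set C(sg, ℝ)) := by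
    rw [dense_iff_closure_eq, ← Subalgebra.topologicalClosure_coe, h]
    rfl
  exact h2

end
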